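/- (Main Theorem, Statement (D).) Let k ≥ 1, R > 0, and x ∈ E with r = ‖x‖ satisfying 0 < r and r ≠ R. Let α, β ∈ ℂ satisfy max(|Im α|, |Im β|) ≤ (π/2) / Real.log((R + r)/|R − r|). If ∫_{y ∈ S^k(R)} ω(x,y)^α dμH[k](y) = ∫_{y ∈ S^k(R)} ω(x,y)^β dμH[k](y), then α + β = k or α = β. -/

import Mathlib

open MeasureTheory Real

/-!
Sending `y` to the second intersection point of the line `xy` with the sphere is an involution which
replaces `ω` by `1 / ω` and scales `k`-dimensional Hausdorff measure by `ω ^ k`. Hence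
`∫ ω ^ γ = ∫ ω ^ (k - γ)`, and averaging the two sides gives
`∫ ω ^ γ = ∫ ω ^ (k / 2) * cosh ((γ - k / 2) * log ω)`. Equality for `α` and `β` thus means
`∫ ω ^ (k / 2) * (cosh z - cosh w) = 0` with `z = (α - k / 2) * log ω`, `w = (β - k / 2) * log ω`.
Now `(cosh z - cosh w) / (z ^ 2 - w ^ 2)` is an average of exponentials whose exponents have
imaginary part below `π / 2` in absolute value, so it has positive real part, which forces
`(α - k / 2) ^ 2 = (β - k / 2) ^ 2`.
-/

open Module Metric
open scoped ENNReal NNReal Topology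

section CoshDifference

lemma re_intervalIntegral_pos {f : ℝ → ℂ} {a b : ℝ} (hab : a < b)
    (hf : IntervalIntegrable f volume a b) (hpos : ∀ s ∈ Set.Ioo a b, 0 < (f s).re) :
    0 < (∫ s in a..b, f s).re := by
  have hre : (∫ s in a..b, f s).re = ∫ s in a..b, (f s).re :=
    (Complex.reCLM.intervalIntegral_comp_comm hf).symm
  rw [hre]
  exact intervalIntegral.intervalIntegral_pos_of_pos_on
    ⟨Complex.reCLM.integrable_comp hf.1, Complex.reCLM.integrable_comp hf.2⟩ hpos hab

lemma mul_integral_exp_mul (z : ℂ) :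
    z * ∫ s in (-1 : ℝ)..1, Complex.exp (z * s) = 2 * Complex.sinh z := by
  rcases eq_or_ne z 0 with rfl | hz
  · simp
  · rw [integral_exp_mul_complex hz, mul_div_cancel₀ _ hz, Complex.sinh]
    push_cast
    ring_nf

lemma cosh_sub_cosh_eq_integral (z w : ℂ) :
    Complex.cosh z - Complex.cosh w = (z ^ 2 - w ^ 2) / 8 *
      ∫ s in (-1 : ℝ)..1, ∫ t in (-1 : ℝ)..1,
        Complex.exp ((z + w) / 2 * s + (z - w) / 2 * t) := by
  have hprod : Complex.cosh z - Complex.cosh w =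
      2 * (Complex.sinh ((z + w) / 2) * Complex.sinh ((z - w) / 2)) := by
    have hz : z = (z + w) / 2 + (z - w) / 2 := by ring
    have hw : w = (z + w) / 2 - (z - w) / 2 := by ring
    conv_lhs => rw [hz, hw]
    rw [Complex.cosh_add, Complex.cosh_sub]
    ring_nf
  have hadd := mul_integral_exp_mul ((z + w) / 2)
  have hsub := mul_integral_exp_mul ((z - w) / 2)
  simp only [Complex.exp_add, intervalIntegral.integral_const_mul,
    intervalIntegral.integral_mul_const]
  rw [hprod]
  linear_combination (-Complex.sinh ((z - w) / 2)) * hadd -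
    ((z + w) / 4 * ∫ s in (-1 : ℝ)..1, Complex.exp ((z + w) / 2 * s)) * hsub

lemma abs_add_mul_add_sub_mul_lt {M u v s t : ℝ} (hM : 0 < M) (hu : |u| ≤ M) (hv : |v| ≤ M)
    (hs : |s| < 1) (ht : |t| < 1) : |(u + v) / 2 * s + (u - v) / 2 * t| < M := by
  have hmax : |s + t| + |s - t| < 2 := by
    rw [abs_lt] at hs ht
    rcases abs_cases (s + t) with h | h <;> rcases abs_cases (s - t) with h' | h' <;> linarith
  calc |(u + v) / 2 * s + (u - v) / 2 * t| = |u * (s + t) + v * (s - t)| / 2 := by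
        rw [← abs_two (α := ℝ), ← abs_div, abs_two]; ring_nf
    _ ≤ (|u| * |s + t| + |v| * |s - t|) / 2 := by
        gcongr; rw [← abs_mul, ← abs_mul]; exact abs_add_le _ _
    _ ≤ (M * |s + t| + M * |s - t|) / 2 := by gcongr
    _ < M := by nlinarith

lemma re_cosh_sub_cosh_div_pos {z w : ℂ} (hz : |z.im| ≤ π / 2) (hw : |w.im| ≤ π / 2)
    (hzw : z ^ 2 ≠ w ^ 2) : 0 < ((Complex.cosh z - Complex.cosh w) / (z ^ 2 - w ^ 2)).re := by
  have hquot : (Complex.cosh z - Complex.cosh w) / (z ^ 2 - w ^ 2) = ((1 / 8 : ℝ) : ℂ) *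
      ∫ s in (-1 : ℝ)..1, ∫ t in (-1 : ℝ)..1,
        Complex.exp ((z + w) / 2 * s + (z - w) / 2 * t) := by
    rw [cosh_sub_cosh_eq_integral]
    rw [mul_div_right_comm, div_right_comm, div_self (sub_ne_zero.2 hzw)]
    norm_num
  rw [hquot, Complex.re_ofReal_mul]
  refine mul_pos (by norm_num) (re_intervalIntegral_pos (by norm_num) ?_ fun s hs ↦
    re_intervalIntegral_pos (by norm_num) ?_ fun t ht ↦ ?_)
  · simp only [Complex.exp_add, intervalIntegral.integral_const_mul]
    exact Continuous.intervalIntegrable (by fun_prop) _ _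
  · exact Continuous.intervalIntegrable (by fun_prop) _ _
  · have him : ((z + w) / 2 * s + (z - w) / 2 * t).im =
        (z.im + w.im) / 2 * s + (z.im - w.im) / 2 * t := by simp
    rw [Complex.exp_re, him]
    exact mul_pos (Real.exp_pos _) (Real.cos_pos_of_mem_Ioo (abs_lt.1
      (abs_add_mul_add_sub_mul_lt Real.pi_div_two_pos hz hw (abs_lt.2 hs) (abs_lt.2 ht))))

lemma re_mul_cosh_sub_mul_cosh_div_pos {a b : ℂ} {g ℓ : ℝ} (hg : 0 < g) (hℓ : ℓ ≠ 0)
    (ha : |a.im| * |ℓ| ≤ π / 2) (hb : |b.im| * |ℓ| ≤ π / 2) (hab : a ^ 2 ≠ b ^ 2) :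
    0 < ((g * Complex.cosh (a * ℓ) - g * Complex.cosh (b * ℓ)) / (a ^ 2 - b ^ 2)).re := by
  have hℓ' : (ℓ : ℂ) ≠ 0 := Complex.ofReal_ne_zero.2 hℓ
  have hab' : a ^ 2 - b ^ 2 ≠ 0 := sub_ne_zero.2 hab
  have hsq : (a * ℓ) ^ 2 ≠ (b * ℓ) ^ 2 := by
    rwa [mul_pow, mul_pow, Ne, mul_left_inj' (pow_ne_zero 2 hℓ')]
  have hcosh := re_cosh_sub_cosh_div_pos (z := a * ℓ) (w := b * ℓ)
    (by simpa [abs_mul] using ha) (by simpa [abs_mul] using hb) hsq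
  have hscale : (g * Complex.cosh (a * ℓ) - g * Complex.cosh (b * ℓ)) / (a ^ 2 - b ^ 2) =
      ((g * ℓ ^ 2 : ℝ) : ℂ) *
        ((Complex.cosh (a * ℓ) - Complex.cosh (b * ℓ)) / ((a * ℓ) ^ 2 - (b * ℓ) ^ 2)) := by
    simp only [mul_pow, ← sub_mul]
    push_cast
    field_simp
  rw [hscale, Complex.re_ofReal_mul]
  positivity

end CoshDifference

section Uniqueness

variable {X : Type*} [MeasurableSpace X] {μ : Measure X}

theorem sq_eq_sq_of_integral_mul_cosh_eq {g ℓ : X → ℝ} {a b : ℂ} (hg : ∀ᵐ x ∂μ, 0 < g x)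
    (hℓ : ¬ ℓ =ᵐ[μ] 0) (ha : ∀ᵐ x ∂μ, |a.im| * |ℓ x| ≤ π / 2)
    (hb : ∀ᵐ x ∂μ, |b.im| * |ℓ x| ≤ π / 2)
    (hga : Integrable (fun x ↦ (g x : ℂ) * Complex.cosh (a * ℓ x)) μ)
    (hgb : Integrable (fun x ↦ (g x : ℂ) * Complex.cosh (b * ℓ x)) μ)
    (h : ∫ x, (g x : ℂ) * Complex.cosh (a * ℓ x) ∂μ = ∫ x, (g x : ℂ) * Complex.cosh (b * ℓ x) ∂μ) :
    a ^ 2 = b ^ 2 := by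
  by_contra hab
  let F : X → ℂ := fun x ↦
    ((g x : ℂ) * Complex.cosh (a * ℓ x) - g x * Complex.cosh (b * ℓ x)) / (a ^ 2 - b ^ 2)
  have hF : Integrable F μ := (hga.sub hgb).div_const _
  have hF_int : ∫ x, (F x).re ∂μ = 0 := by
    have hre : ∫ x, (F x).re ∂μ = (∫ x, F x ∂μ).re := integral_re hF
    rw [hre, integral_div, integral_sub hga hgb, h, sub_self, zero_div, Complex.zero_re]
  have hF_pos : ∀ᵐ x ∂μ, ℓ x ≠ 0 → 0 < (F x).re := by
    filter_upwards [hg, ha, hb] with x hgx hax hbx hℓx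
    exact re_mul_cosh_sub_mul_cosh_div_pos hgx hℓx hax hbx hab
  have hF_nonneg : 0 ≤ᵐ[μ] fun x ↦ (F x).re := by
    filter_upwards [hF_pos] with x hx
    rcases eq_or_ne (ℓ x) 0 with hℓx | hℓx
    · simp [F, hℓx]
    · exact (hx hℓx).le
  refine hℓ ?_
  filter_upwards [hF_pos, (integral_eq_zero_iff_of_nonneg_ae hF_nonneg hF.re).1 hF_int]
    with x hpos hzero
  by_contra hℓx
  exact (hpos hℓx).ne' hzero

lemma ofReal_cpow_add_cpow_sub {x : ℝ} (hx : 0 < x) (c : ℝ) (γ : ℂ) :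
    (x : ℂ) ^ γ + (x : ℂ) ^ (c - γ) =
      2 * (((x ^ (c / 2) : ℝ) : ℂ) * Complex.cosh ((γ - c / 2) * Real.log x)) := by
  have hx' : (x : ℂ) ≠ 0 := Complex.ofReal_ne_zero.2 hx.ne'
  rw [Complex.ofReal_cpow hx.le, Complex.cosh, Complex.ofReal_log hx.le]
  simp only [Complex.cpow_def_of_ne_zero hx']
  rw [show ∀ u v w : ℂ, 2 * (u * ((v + w) / 2)) = u * v + u * w from fun u v w ↦ by ring,
    ← Complex.exp_add, ← Complex.exp_add]
  push_cast
  ring_nf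

lemma integrable_cpow_of_abs_log_le [IsFiniteMeasure μ] {f : X → ℝ} {L : ℝ} (hf : AEMeasurable f μ)
    (hf_pos : ∀ᵐ x ∂μ, 0 < f x) (hL : ∀ᵐ x ∂μ, |Real.log (f x)| ≤ L) (γ : ℂ) :
    Integrable (fun x ↦ (f x : ℂ) ^ γ) μ := by
  refine .of_bound (C := Real.exp (L * |γ.re|))
    (Complex.measurable_ofReal.comp_aemeasurable hf |>.pow_const γ).aestronglyMeasurable ?_
  filter_upwards [hf_pos, hL] with x hx hLx
  rw [Complex.norm_cpow_eq_rpow_re_of_pos hx, Real.rpow_def_of_pos hx]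
  refine Real.exp_le_exp.2 ?_
  calc Real.log (f x) * γ.re ≤ |Real.log (f x)| * |γ.re| := by
        rw [← abs_mul]; exact le_abs_self _
    _ ≤ L * |γ.re| := by gcongr

theorem add_eq_or_eq_of_integral_cpow_eq [IsFiniteMeasure μ] {f : X → ℝ} {c L : ℝ} {α β : ℂ}
    (hf : AEMeasurable f μ) (hf_pos : ∀ᵐ x ∂μ, 0 < f x) (hf_one : ¬ f =ᵐ[μ] 1)
    (hL : ∀ᵐ x ∂μ, |Real.log (f x)| ≤ L) (hα : |α.im| * L ≤ π / 2) (hβ : |β.im| * L ≤ π / 2)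
    (hsymm : ∀ γ : ℂ, ∫ x, (f x : ℂ) ^ γ ∂μ = ∫ x, (f x : ℂ) ^ (c - γ) ∂μ)
    (h : ∫ x, (f x : ℂ) ^ α ∂μ = ∫ x, (f x : ℂ) ^ β ∂μ) : α + β = c ∨ α = β := by
  let G : ℂ → X → ℂ := fun γ x ↦
    ((f x ^ (c / 2) : ℝ) : ℂ) * Complex.cosh ((γ - c / 2) * Real.log (f x))
  have hint := integrable_cpow_of_abs_log_le hf hf_pos hL
  have hG : ∀ γ : ℂ, (fun x ↦ ((f x : ℂ) ^ γ + (f x : ℂ) ^ (c - γ)) / 2) =ᵐ[μ] G γ := fun γ ↦ by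
    filter_upwards [hf_pos] with x hx
    rw [ofReal_cpow_add_cpow_sub hx, mul_div_cancel_left₀ _ two_ne_zero]
  have hG_int : ∀ γ, Integrable (G γ) μ := fun γ ↦
    (((hint γ).add (hint (c - γ))).div_const 2).congr (hG γ)
  have hG_eq : ∀ γ, ∫ x, G γ x ∂μ = ∫ x, (f x : ℂ) ^ γ ∂μ := fun γ ↦ by
    rw [← integral_congr_ae (hG γ), integral_div, integral_add (hint γ) (hint _), ← hsymm γ]
    ring
  have him : ∀ γ : ℂ, |γ.im| * L ≤ π / 2 →
      ∀ᵐ x ∂μ, |(γ - c / 2).im| * |Real.log (f x)| ≤ π / 2 := fun γ hγ ↦ by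
    filter_upwards [hL] with x hx
    have : (γ - c / 2).im = γ.im := by simp
    rw [this]
    exact (mul_le_mul_of_nonneg_left hx (abs_nonneg _)).trans hγ
  have hlog : ¬ (fun x ↦ Real.log (f x)) =ᵐ[μ] 0 := fun h0 ↦ hf_one <| by
    filter_upwards [h0, hf_pos] with x hx hpos using Real.eq_one_of_pos_of_log_eq_zero hpos hx
  have hsq : (α - c / 2) ^ 2 = (β - c / 2) ^ 2 :=
    sq_eq_sq_of_integral_mul_cosh_eq (hf_pos.mono fun _ hx ↦ Real.rpow_pos_of_pos hx _) hlog
      (him α hα) (him β hβ) (hG_int α) (hG_int β) ((hG_eq α).trans (h.trans (hG_eq β).symm))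
  rcases sq_eq_sq_iff_eq_or_eq_neg.1 hsq with hαβ | hαβ
  · exact .inr (sub_left_injective hαβ)
  · exact .inl (by linear_combination hαβ)

end Uniqueness

section HausdorffImage

lemma le_of_forall_one_lt_le_rpow_mul {u v : ℝ≥0∞} (d : ℝ)
    (h : ∀ t : ℝ≥0, 1 < t → u ≤ (t : ℝ≥0∞) ^ d * v) : u ≤ v := by
  have hlim : Filter.Tendsto (fun t : ℝ≥0 ↦ (t : ℝ≥0∞) ^ d * v) (𝓝[>] 1)
      (𝓝 (((1 : ℝ≥0) : ℝ≥0∞) ^ d * v)) := by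
    refine ENNReal.Tendsto.mul_const (Filter.Tendsto.mono_left ?_ nhdsWithin_le_nhds)
      (.inl (by simp))
    exact (ENNReal.continuous_rpow_const.comp ENNReal.continuous_coe).tendsto _
  simpa using ge_of_tendsto hlim (Filter.eventually_of_mem self_mem_nhdsWithin h)

lemma measure_image_le_add_tsum_preimage_Ico_zpow {X Y : Type*} [MeasurableSpace Y]
    {μ : Measure Y} (T : X → Y) (f : X → ℝ≥0) (S : Set X) {t : ℝ≥0} (ht : 1 < t) :
    μ (T '' S) ≤ μ (T '' (f ⁻¹' {0} ∩ S)) +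
      ∑' n : ℤ, μ (T '' (f ⁻¹' Set.Ico (t ^ n) (t ^ (n + 1)) ∩ S)) := by
  have hcover : S ⊆ (f ⁻¹' {0} ∩ S) ∪ ⋃ n : ℤ, f ⁻¹' Set.Ico (t ^ n) (t ^ (n + 1)) ∩ S := by
    intro x hx
    rcases eq_or_ne (f x) 0 with h0 | h0
    · exact .inl ⟨h0, hx⟩
    · obtain ⟨n, hn⟩ := NNReal.exists_mem_Ico_zpow h0 ht
      exact .inr (Set.mem_iUnion.2 ⟨n, hn, hx⟩)
  refine (measure_mono (Set.image_mono hcover)).trans ?_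
  rw [Set.image_union, Set.image_iUnion]
  exact (measure_union_le _ _).trans (add_le_add_right (measure_iUnion_le _) _)

lemma measure_add_tsum_preimage_Ico_zpow_le {X : Type*} [MeasurableSpace X] {μ : Measure X}
    {f : X → ℝ≥0} (hf : Measurable f) {t : ℝ≥0} (ht : 1 < t) :
    μ (f ⁻¹' {0}) + ∑' n : ℤ, μ (f ⁻¹' Set.Ico (t ^ n) (t ^ (n + 1))) ≤ μ Set.univ := by
  have ht0 : t ≠ 0 := (zero_lt_one.trans ht).ne'
  rw [measure_eq_measure_preimage_add_measure_tsum_Ico_zpow μ hf.coe_nnreal_ennreal .univ ht]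
  have hzero : (fun x ↦ (f x : ℝ≥0∞)) ⁻¹' {0} = f ⁻¹' {0} := by ext; simp
  have hslice (n : ℤ) : (fun x ↦ (f x : ℝ≥0∞)) ⁻¹' Set.Ico ((t : ℝ≥0∞) ^ n) (t ^ (n + 1)) =
      f ⁻¹' Set.Ico (t ^ n) (t ^ (n + 1)) := by
    ext
    simp only [Set.mem_preimage, Set.mem_Ico, ← ENNReal.coe_zpow ht0, ENNReal.coe_le_coe,
      ENNReal.coe_lt_coe]
  simp only [Set.univ_inter, hzero, hslice]
  exact add_le_add_left le_self_add _

variable {X Y : Type*} [EMetricSpace X] [MeasurableSpace X] [BorelSpace X]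
  [EMetricSpace Y] [MeasurableSpace Y] [BorelSpace Y]

lemma hausdorffMeasure_image_le_mul_lintegral {T : X → Y} {f : X → ℝ≥0} {A : Set X} {a t : ℝ≥0}
    {d : ℝ} (hd : 0 ≤ d) (hf : Measurable f) (hT : LipschitzOnWith (t * a) T A)
    (ha : ∀ x ∈ A, a ≤ f x) :
    μH[d] (T '' A) ≤ (t : ℝ≥0∞) ^ d * ∫⁻ x in A, (f x : ℝ≥0∞) ^ d ∂μH[d] :=
  calc μH[d] (T '' A) ≤ ((t * a : ℝ≥0) : ℝ≥0∞) ^ d * μH[d] A := hT.hausdorffMeasure_image_le hd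
    _ = (t : ℝ≥0∞) ^ d * ∫⁻ _ in A, (a : ℝ≥0∞) ^ d ∂μH[d] := by
      rw [setLIntegral_const, ENNReal.coe_mul, ENNReal.mul_rpow_of_nonneg _ _ hd, mul_assoc]
    _ ≤ (t : ℝ≥0∞) ^ d * ∫⁻ x in A, (f x : ℝ≥0∞) ^ d ∂μH[d] := by
      refine mul_le_mul_right (setLIntegral_mono (hf.coe_nnreal_ennreal.pow_const d) ?_) _
      intro x hx
      exact ENNReal.rpow_le_rpow (ENNReal.coe_le_coe.2 (ha x hx)) hd

-- On each slice `t ^ n ≤ f < t ^ (n + 1)` the map `T` is Lipschitz with a constant comparable to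
-- `f` up to the factor `t`; then let `t` decrease to `1`.
theorem hausdorffMeasure_image_le_lintegral {T : X → Y} {f : X → ℝ≥0} {S : Set X} {d : ℝ}
    (hd : 0 ≤ d) (hf : Measurable f) (hT : ∀ K : ℝ≥0, LipschitzOnWith K T {x ∈ S | f x ≤ K}) :
    μH[d] (T '' S) ≤ ∫⁻ x in S, (f x : ℝ≥0∞) ^ d ∂μH[d] := by
  refine le_of_forall_one_lt_le_rpow_mul d fun t ht ↦ ?_
  let slice : ℤ → Set X := fun n ↦ f ⁻¹' Set.Ico (t ^ n) (t ^ (n + 1))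
  let zeros : Set X := f ⁻¹' {0}
  let ν : Measure X := (μH[d].restrict S).withDensity fun x ↦ (f x : ℝ≥0∞) ^ d
  have hν {A : Set X} (hA : MeasurableSet A) :
      ν A = ∫⁻ x in A ∩ S, (f x : ℝ≥0∞) ^ d ∂μH[d] := by
    rw [withDensity_apply _ hA, Measure.restrict_restrict hA]
  have hzeros : μH[d] (T '' (zeros ∩ S)) ≤ (t : ℝ≥0∞) ^ d * ν zeros := by
    rw [hν (hf (measurableSet_singleton 0))]
    refine hausdorffMeasure_image_le_mul_lintegral (a := 0) hd hf ?_ fun _ _ ↦ zero_le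
    refine (hT _).mono fun x ⟨hx, hxS⟩ ↦ ⟨hxS, ?_⟩
    rw [Set.mem_singleton_iff.1 hx, mul_zero]
  have hslice (n : ℤ) : μH[d] (T '' (slice n ∩ S)) ≤ (t : ℝ≥0∞) ^ d * ν (slice n) := by
    rw [hν (hf measurableSet_Ico)]
    refine hausdorffMeasure_image_le_mul_lintegral hd hf ?_ fun x ⟨hx, _⟩ ↦ hx.1
    refine (hT _).mono fun x ⟨hx, hxS⟩ ↦ ⟨hxS, ?_⟩
    rw [← zpow_one_add₀ (zero_lt_one.trans ht).ne', add_comm]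
    exact hx.2.le
  calc μH[d] (T '' S)
      ≤ μH[d] (T '' (zeros ∩ S)) + ∑' n, μH[d] (T '' (slice n ∩ S)) :=
        measure_image_le_add_tsum_preimage_Ico_zpow T f S ht
    _ ≤ (t : ℝ≥0∞) ^ d * ν zeros + ∑' n, (t : ℝ≥0∞) ^ d * ν (slice n) :=
        add_le_add hzeros (ENNReal.tsum_le_tsum hslice)
    _ = (t : ℝ≥0∞) ^ d * (ν zeros + ∑' n, ν (slice n)) := by rw [ENNReal.tsum_mul_left, mul_add]
    _ ≤ (t : ℝ≥0∞) ^ d * ν Set.univ :=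
        mul_le_mul_right (measure_add_tsum_preimage_Ico_zpow_le hf ht) _
    _ = (t : ℝ≥0∞) ^ d * ∫⁻ x in S, (f x : ℝ≥0∞) ^ d ∂μH[d] := by
        rw [hν .univ, Set.univ_inter]

end HausdorffImage

theorem map_eq_withDensity_of_le {X : Type*} [MeasurableSpace X] {μ : Measure X} {T : X → X}
    {f : X → ℝ≥0∞} (hT : Measurable T) (hf : Measurable f) (hTT : ∀ᵐ x ∂μ, T (T x) = x)
    (hfT : ∀ᵐ x ∂μ, f x * f (T x) = 1) (hle : μ.map T ≤ μ.withDensity f) :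
    μ.map T = μ.withDensity f := by
  refine le_antisymm hle (Measure.le_iff.2 fun A hA ↦ ?_)
  have hm : Measurable fun x ↦ A.indicator f (T x) := (hf.indicator hA).comp hT
  calc μ.withDensity f A = ∫⁻ x, A.indicator f x ∂μ := by
        rw [withDensity_apply _ hA, lintegral_indicator hA]
    _ = ∫⁻ x, A.indicator f (T (T x)) ∂μ :=
        lintegral_congr_ae (hTT.mono fun x hx ↦ by simp only [hx])
    _ = ∫⁻ x, A.indicator f (T x) ∂μ.map T := (lintegral_map hm hT).symm
    _ ≤ ∫⁻ x, A.indicator f (T x) ∂μ.withDensity f := lintegral_mono' hle le_rfl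
    _ = ∫⁻ x, f x * A.indicator f (T x) ∂μ := lintegral_withDensity_eq_lintegral_mul _ hf hm
    _ = ∫⁻ x, (T ⁻¹' A).indicator 1 x ∂μ := lintegral_congr_ae (hfT.mono fun x hx ↦ by
        by_cases hxA : T x ∈ A <;> simp [Set.indicator, hxA, hx])
    _ = μ.map T A := by rw [lintegral_indicator_one (hT hA), Measure.map_apply hT hA]

section Omega

variable {E : Type*} [NormedAddCommGroup E] {x y : E} {R : ℝ}

/-- The kernel `ω(x, y)`; division by zero gives it the value `0` on the diagonal. -/
noncomputable def omega (x y : E) : ℝ := |‖x‖ ^ 2 - ‖y‖ ^ 2| / ‖x - y‖ ^ 2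

lemma norm_sq_sub_norm_sq_ne_zero (h : ‖x‖ ≠ ‖y‖) : ‖x‖ ^ 2 - ‖y‖ ^ 2 ≠ 0 :=
  sub_ne_zero.2 fun hsq ↦ h ((sq_eq_sq₀ (norm_nonneg x) (norm_nonneg y)).1 hsq)

lemma omega_pos (h : ‖x‖ ≠ ‖y‖) : 0 < omega x y :=
  div_pos (abs_pos.2 (norm_sq_sub_norm_sq_ne_zero h))
    (pow_pos (norm_sub_pos_iff.2 (ne_of_apply_ne norm h)) 2)

lemma abs_log_omega_le (h : ‖x‖ ≠ ‖y‖) :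
    |Real.log (omega x y)| ≤ Real.log ((‖y‖ + ‖x‖) / |‖y‖ - ‖x‖|) := by
  have hgap : 0 < |‖y‖ - ‖x‖| := abs_pos.2 (sub_ne_zero.2 h.symm)
  have hlow : |‖y‖ - ‖x‖| ≤ ‖x - y‖ := by
    rw [norm_sub_rev]; exact abs_norm_sub_norm_le y x
  have hhigh : ‖x - y‖ ≤ ‖y‖ + ‖x‖ := (norm_sub_le x y).trans_eq (add_comm _ _)
  have hdist : 0 < ‖x - y‖ := hgap.trans_le hlow
  have hsum : 0 < ‖y‖ + ‖x‖ := hdist.trans_le hhigh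
  have homega : omega x y = |‖y‖ - ‖x‖| * (‖y‖ + ‖x‖) / ‖x - y‖ ^ 2 := by
    rw [omega, abs_sub_comm, sq_sub_sq, abs_mul, abs_of_pos hsum, mul_comm]
  rw [abs_le, ← Real.log_inv]
  refine ⟨Real.log_le_log (by positivity) ?_, Real.log_le_log (omega_pos h) ?_⟩
  · rw [homega, inv_div, div_le_div_iff₀ hsum (by positivity), mul_assoc, ← sq]
    gcongr
  · rw [homega, div_le_div_iff₀ (by positivity) hgap, mul_right_comm, ← sq, mul_comm]
    gcongr

lemma one_lt_omega_smul [NormedSpace ℝ E] (hR : 0 < R) (hx0 : 0 < ‖x‖) (hx : ‖x‖ ≠ R) :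
    1 < omega x ((R / ‖x‖) • x) := by
  have hgap : 0 < |‖x‖ - R| := abs_pos.2 (sub_ne_zero.2 hx)
  have hnorm : ‖(R / ‖x‖) • x‖ = R := by
    rw [norm_smul, norm_div, norm_norm, Real.norm_of_nonneg hR.le, div_mul_cancel₀ _ hx0.ne']
  have hdist : ‖x - (R / ‖x‖) • x‖ = |‖x‖ - R| := by
    have : x - (R / ‖x‖) • x = ((‖x‖ - R) / ‖x‖) • x := by
      rw [sub_div, div_self hx0.ne', sub_smul, one_smul]
    rw [this, norm_smul, norm_div, norm_norm, Real.norm_eq_abs, div_mul_cancel₀ _ hx0.ne']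
  rw [omega, hnorm, hdist, sq_sub_sq, abs_mul, abs_of_pos (add_pos hx0 hR),
    one_lt_div (pow_pos hgap 2), sq]
  exact mul_lt_mul_of_pos_right (abs_sub_lt_iff.2 ⟨by linarith, by linarith⟩) hgap

lemma continuousAt_omega (h : x ≠ y) : ContinuousAt (omega x) y :=
  ContinuousAt.div (by fun_prop) (by fun_prop)
    (pow_ne_zero 2 (norm_ne_zero_iff.2 (sub_ne_zero.2 h)))

lemma measurable_omega [MeasurableSpace E] [BorelSpace E]
    [SecondCountableTopology E] (x : E) : Measurable (omega x) := by
  unfold omega; fun_prop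

end Omega

section ChordInvolution

variable {E : Type*} [NormedAddCommGroup E] [InnerProductSpace ℝ E] {x y z : E} {R : ℝ}

/-- The second point in which the line through `x` and `y` meets the sphere of radius `‖y‖` around
the origin: by the power of the point `x`, it is `x + s • (y - x)` with
`s * ‖y - x‖ ^ 2 = ‖x‖ ^ 2 - ‖y‖ ^ 2`. -/
noncomputable def chordInvolution (x y : E) : E :=
  x + ((‖x‖ ^ 2 - ‖y‖ ^ 2) / ‖x - y‖ ^ 2) • (y - x)

lemma sub_chordInvolution (x y : E) :
    x - chordInvolution x y = ((‖x‖ ^ 2 - ‖y‖ ^ 2) / ‖x - y‖ ^ 2) • (x - y) := by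
  rw [chordInvolution, sub_add_cancel_left, ← smul_neg, neg_sub]

lemma norm_sub_chordInvolution_sq (x y : E) :
    ‖x - chordInvolution x y‖ ^ 2 = (‖x‖ ^ 2 - ‖y‖ ^ 2) ^ 2 / ‖x - y‖ ^ 2 := by
  rw [sub_chordInvolution, norm_smul, mul_pow, Real.norm_eq_abs, sq_abs]
  rcases eq_or_ne ‖x - y‖ 0 with h | h
  · simp [h]
  · field_simp

@[simp]
lemma norm_chordInvolution (x y : E) : ‖chordInvolution x y‖ = ‖y‖ := by
  rcases eq_or_ne x y with rfl | h
  · simp [chordInvolution]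
  have h0 : ‖x - y‖ ≠ 0 := norm_ne_zero_iff.2 (sub_ne_zero.2 h)
  rw [← sq_eq_sq₀ (norm_nonneg _) (norm_nonneg _), chordInvolution, norm_add_sq_real,
    inner_smul_right, norm_smul, mul_pow, Real.norm_eq_abs, sq_abs, norm_sub_rev y x,
    inner_sub_right, real_inner_self_eq_norm_sq]
  have hxy := norm_sub_sq_real x y
  field_simp
  linear_combination (‖x‖ ^ 2 - ‖y‖ ^ 2) * hxy

lemma chordInvolution_chordInvolution (h : ‖x‖ ≠ ‖y‖) :
    chordInvolution x (chordInvolution x y) = y := by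
  have hxy : ‖x - y‖ ≠ 0 := norm_ne_zero_iff.2 (sub_ne_zero.2 (ne_of_apply_ne norm h))
  have hpow := norm_sq_sub_norm_sq_ne_zero h
  rw [← sub_right_inj (a := x), sub_chordInvolution, norm_chordInvolution,
    norm_sub_chordInvolution_sq, sub_chordInvolution, smul_smul]
  convert one_smul ℝ (x - y) using 2
  field_simp

lemma omega_chordInvolution (h : ‖x‖ ≠ ‖y‖) :
    omega x (chordInvolution x y) = (omega x y)⁻¹ := by
  have hpow := abs_ne_zero.2 (norm_sq_sub_norm_sq_ne_zero h)
  rw [omega, omega, norm_chordInvolution, norm_sub_chordInvolution_sq, ← sq_abs (‖x‖ ^ 2 - _)]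
  field_simp

lemma dist_chordInvolution_sq (hy : ‖x‖ ≠ ‖y‖) (hyz : ‖y‖ = ‖z‖) :
    dist (chordInvolution x y) (chordInvolution x z) ^ 2 =
      omega x y * omega x z * dist y z ^ 2 := by
  have hinv (w : E) : chordInvolution x w =
      x + (‖x‖ ^ 2 - ‖w‖ ^ 2) • ((1 / ‖w - x‖) ^ 2 • (w - x)) := by
    rw [chordInvolution, smul_smul, norm_sub_rev x w]
    congr 2
    ring
  rw [hinv y, hinv z, hyz, dist_add_left, dist_smul₀,
    dist_div_norm_sq_smul (sub_ne_zero.2 (ne_of_apply_ne norm hy).symm)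
      (sub_ne_zero.2 (ne_of_apply_ne norm (hyz ▸ hy)).symm) 1, dist_sub_right, omega, omega, hyz,
    norm_sub_rev y x, norm_sub_rev z x, Real.norm_eq_abs]
  ring

lemma lipschitzOnWith_chordInvolution (hx : ‖x‖ ≠ R) (K : ℝ≥0) :
    LipschitzOnWith K (chordInvolution x) {y ∈ sphere 0 R | (omega x y).toNNReal ≤ K} := by
  refine .of_dist_le_mul fun y ⟨hy, hyK⟩ z ⟨hz, hzK⟩ ↦ ?_
  rw [mem_sphere_zero_iff_norm] at hy hz
  have hωz : 0 ≤ omega x z := (omega_pos (hz ▸ hx)).le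
  refine abs_le_of_sq_le_sq' ?_ (by positivity) |>.2
  calc dist (chordInvolution x y) (chordInvolution x z) ^ 2
      = omega x y * omega x z * dist y z ^ 2 :=
        dist_chordInvolution_sq (hy ▸ hx) (hy.trans hz.symm)
    _ ≤ K * K * dist y z ^ 2 := by
        gcongr
        exacts [Real.toNNReal_le_iff_le_coe.1 hyK, Real.toNNReal_le_iff_le_coe.1 hzK]
    _ = (K * dist y z) ^ 2 := by ring

variable [MeasurableSpace E] [BorelSpace E]

lemma measurable_chordInvolution [SecondCountableTopology E] (x : E) :
    Measurable (chordInvolution x) := by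
  unfold chordInvolution; fun_prop

end ChordInvolution

section Symmetry

lemma ae_restrict_sphere_norm_ne {E : Type*} [NormedAddCommGroup E] [MeasurableSpace E]
    [BorelSpace E] {x : E} {R : ℝ} (hx : ‖x‖ ≠ R) (μ : Measure E) :
    ∀ᵐ y ∂μ.restrict (sphere 0 R), ‖x‖ ≠ ‖y‖ := by
  filter_upwards [ae_restrict_mem isClosed_sphere.measurableSet] with y hy
  rwa [mem_sphere_zero_iff_norm.1 hy]

variable {E : Type*} [NormedAddCommGroup E] [InnerProductSpace ℝ E] [MeasurableSpace E]
  [BorelSpace E] [SecondCountableTopology E] {x : E} {R d : ℝ}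

theorem map_chordInvolution (hd : 0 ≤ d) (hx : ‖x‖ ≠ R) :
    (μH[d].restrict (sphere (0 : E) R)).map (chordInvolution x) =
      (μH[d].restrict (sphere (0 : E) R)).withDensity fun y ↦ ENNReal.ofReal (omega x y) ^ d := by
  have hT := measurable_chordInvolution x
  have hω : Measurable fun y ↦ (omega x y).toNNReal := (measurable_omega x).real_toNNReal
  have hne := ae_restrict_sphere_norm_ne hx (μH[d] : Measure E)
  refine map_eq_withDensity_of_le hT (hω.coe_nnreal_ennreal.pow_const d)
    (hne.mono fun y hy ↦ chordInvolution_chordInvolution hy) (hne.mono fun y hy ↦ ?_)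
    (Measure.le_iff.2 fun A hA ↦ ?_)
  · rw [← ENNReal.mul_rpow_of_nonneg _ _ hd, ← ENNReal.ofReal_mul (omega_pos hy).le,
      omega_chordInvolution hy, mul_inv_cancel₀ (omega_pos hy).ne', ENNReal.ofReal_one,
      ENNReal.one_rpow]
  · have hsub : chordInvolution x ⁻¹' A ∩ sphere 0 R ⊆ chordInvolution x '' (A ∩ sphere 0 R) := by
      refine fun y ⟨hyA, hyR⟩ ↦ ⟨chordInvolution x y, ⟨hyA, by simpa using hyR⟩, ?_⟩
      exact chordInvolution_chordInvolution (by rwa [mem_sphere_zero_iff_norm.1 hyR])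
    rw [Measure.map_apply hT hA, Measure.restrict_apply (hT hA), withDensity_apply _ hA,
      Measure.restrict_restrict hA]
    exact (measure_mono hsub).trans (hausdorffMeasure_image_le_lintegral hd hω fun K ↦
      (lipschitzOnWith_chordInvolution hx K).mono fun y hy ↦ ⟨hy.1.2, hy.2⟩)

theorem integral_omega_cpow_eq_sub (hd : 0 ≤ d) (hx : ‖x‖ ≠ R) (γ : ℂ) :
    ∫ y in sphere (0 : E) R, (omega x y : ℂ) ^ γ ∂μH[d] =
      ∫ y in sphere (0 : E) R, (omega x y : ℂ) ^ (d - γ) ∂μH[d] := by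
  have hne := ae_restrict_sphere_norm_ne hx (μH[d] : Measure E)
  have hω : Measurable fun y ↦ (omega x y : ℂ) :=
    Complex.measurable_ofReal.comp (measurable_omega x)
  calc ∫ y in sphere (0 : E) R, (omega x y : ℂ) ^ γ ∂μH[d]
      = ∫ y in sphere (0 : E) R, (omega x (chordInvolution x y) : ℂ) ^ (-γ) ∂μH[d] := by
        refine integral_congr_ae (hne.mono fun y hy ↦ ?_)
        simp only [omega_chordInvolution hy]
        rw [Complex.ofReal_inv, Complex.inv_cpow _ _ (by
          rw [Complex.arg_ofReal_of_nonneg (omega_pos hy).le]; exact Real.pi_pos.ne),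
          Complex.cpow_neg, inv_inv]
    _ = ∫ y, (omega x y : ℂ) ^ (-γ)
          ∂(μH[d].restrict (sphere (0 : E) R)).map (chordInvolution x) :=
        (integral_map (measurable_chordInvolution x).aemeasurable
          (hω.pow_const (-γ)).aestronglyMeasurable).symm
    _ = ∫ y in sphere (0 : E) R,
          (ENNReal.ofReal (omega x y) ^ d).toReal • (omega x y : ℂ) ^ (-γ) ∂μH[d] := by
        rw [map_chordInvolution hd hx, integral_withDensity_eq_integral_toReal_smul
          ((measurable_omega x).ennreal_ofReal.pow_const d)
          (ae_of_all _ fun y ↦ ENNReal.rpow_lt_top_of_nonneg hd ENNReal.ofReal_ne_top)]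
    _ = ∫ y in sphere (0 : E) R, (omega x y : ℂ) ^ (d - γ) ∂μH[d] := by
        refine integral_congr_ae (hne.mono fun y hy ↦ ?_)
        have hω0 : (omega x y : ℂ) ≠ 0 := Complex.ofReal_ne_zero.2 (omega_pos hy).ne'
        simp only [← ENNReal.toReal_rpow, ENNReal.toReal_ofReal (omega_pos hy).le,
          Complex.real_smul, Complex.ofReal_cpow (omega_pos hy).le, sub_eq_add_neg,
          Complex.cpow_add _ _ hω0]

end Symmetry

section SphereMeasure

variable {E : Type*} [NormedAddCommGroup E] [InnerProductSpace ℝ E]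

/-- The inverse of the orthogonal projection onto `(ℝ ∙ y)ᗮ` of the closed hemisphere centred at `y`
of the sphere of radius `‖y‖` around the origin; only the values for `‖v‖ ≤ ‖y‖` are meaningful. -/
noncomputable def sphereChart (y : E) (v : (ℝ ∙ y)ᗮ) : E := v + √(1 - (‖v‖ / ‖y‖) ^ 2) • y

lemma sphereChart_zero (y : E) : sphereChart y 0 = y := by simp [sphereChart]

lemma norm_sphereChart {y : E} {v : (ℝ ∙ y)ᗮ} (hv : ‖v‖ ≤ ‖y‖) : ‖sphereChart y v‖ = ‖y‖ := by
  rcases eq_or_ne y 0 with rfl | hy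
  · have hv0 : v = 0 := by simpa using hv
    simp [hv0, sphereChart_zero]
  have hy0 : 0 < ‖y‖ := norm_pos_iff.2 hy
  have hinner : inner ℝ (v : E) (√(1 - (‖v‖ / ‖y‖) ^ 2) • y) = 0 := by
    rw [inner_smul_right, Submodule.mem_orthogonal_singleton_iff_inner_left.1 v.2, mul_zero]
  have hsqrt : 0 ≤ 1 - (‖v‖ / ‖y‖) ^ 2 :=
    sub_nonneg.2 (pow_le_one₀ (by positivity) ((div_le_one hy0).2 hv))
  rw [← sq_eq_sq₀ (norm_nonneg _) (norm_nonneg _), sphereChart, norm_add_sq_real, hinner,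
    norm_smul, mul_pow, Real.norm_eq_abs, sq_abs, Real.sq_sqrt hsqrt, Submodule.coe_norm]
  field_simp
  ring

lemma orthogonalProjectionOnto_sphereChart (y : E) (v : (ℝ ∙ y)ᗮ) :
    (ℝ ∙ y)ᗮ.orthogonalProjectionOnto (sphereChart y v) = v := by
  rw [sphereChart, map_add, map_smul, Submodule.orthogonalProjectionOnto_mem_subspace_eq_self,
    Submodule.orthogonalProjectionOnto_orthogonalComplement_singleton_eq_zero, smul_zero, add_zero]

lemma sphereChart_orthogonalProjectionOnto {y z : E} (hy : y ≠ 0) (hz : ‖z‖ = ‖y‖)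
    (hyz : 0 ≤ inner ℝ y z) :
    sphereChart y ((ℝ ∙ y)ᗮ.orthogonalProjectionOnto z) = z := by
  have hP : ((ℝ ∙ y)ᗮ.orthogonalProjectionOnto z : E) = z - (inner ℝ y z / ‖y‖ ^ 2) • y := by
    rw [Submodule.coe_orthogonalProjectionOnto_apply, Submodule.starProjection_orthogonal_val,
      Submodule.starProjection_singleton]
    simp
  have hnorm : 1 - (‖(ℝ ∙ y)ᗮ.orthogonalProjectionOnto z‖ / ‖y‖) ^ 2 =
      (inner ℝ y z / ‖y‖ ^ 2) ^ 2 := by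
    rw [Submodule.coe_norm, hP, div_pow, norm_sub_sq_real, inner_smul_right, norm_smul, mul_pow,
      Real.norm_eq_abs, sq_abs, real_inner_comm, hz]
    field_simp
    ring
  rw [sphereChart, hnorm, Real.sqrt_sq (by positivity), hP, sub_add_cancel]

lemma contDiffAt_sphereChart (y : E) : ContDiffAt ℝ 1 (sphereChart y) 0 := by
  have hsq : ContDiff ℝ 1 fun v : (ℝ ∙ y)ᗮ ↦ 1 - (‖v‖ / ‖y‖) ^ 2 := by
    simp only [div_pow]
    exact contDiff_const.sub ((contDiff_norm_sq ℝ).div_const _)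
  exact ((ℝ ∙ y)ᗮ.subtypeL.contDiff.contDiffAt).add
    ((hsq.contDiffAt.sqrt (by simp)).smul contDiffAt_const)

variable [MeasurableSpace E] [BorelSpace E] {k : ℕ} [Fact (finrank ℝ E = k + 1)]

lemma isAddHaarMeasure_hausdorffMeasure_orthogonal {y : E} (hy : y ≠ 0) :
    (μH[k] : Measure (ℝ ∙ y)ᗮ).IsAddHaarMeasure := by
  have : FiniteDimensional ℝ E := .of_fact_finrank_eq_succ k
  have h := isAddHaarMeasure_hausdorffMeasure (E := (ℝ ∙ y)ᗮ)
  rwa [Submodule.finrank_orthogonal_span_singleton (n := k) hy] at h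

lemma hausdorffMeasure_inter_sphere_pos {y : E} (hy : y ≠ 0) {U : Set E} (hU : U ∈ 𝓝 y) :
    0 < μH[k] (U ∩ sphere 0 ‖y‖) := by
  have := isAddHaarMeasure_hausdorffMeasure_orthogonal (k := k) hy
  have hV : sphereChart y ⁻¹' U ∩ ball 0 ‖y‖ ∈ 𝓝 0 :=
    Filter.inter_mem ((contDiffAt_sphereChart y).continuousAt (by rwa [sphereChart_zero]))
      (ball_mem_nhds 0 (norm_pos_iff.2 hy))
  have hsub : sphereChart y ⁻¹' U ∩ ball 0 ‖y‖ ⊆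
      (ℝ ∙ y)ᗮ.orthogonalProjectionOnto '' (U ∩ sphere 0 ‖y‖) := fun v ⟨hvU, hv⟩ ↦
    ⟨sphereChart y v, ⟨hvU, mem_sphere_zero_iff_norm.2
      (norm_sphereChart (mem_ball_zero_iff.1 hv).le)⟩, orthogonalProjectionOnto_sphereChart y v⟩
  exact (Measure.measure_pos_of_mem_nhds μH[k] hV).trans_le
    ((measure_mono hsub).trans (hausdorffMeasure_orthogonalProjectionOnto_le _ _ _ k.cast_nonneg))

theorem hausdorffMeasure_sphere_lt_top {R : ℝ} (hR : R ≠ 0) :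
    μH[k] (sphere (0 : E) R) < ∞ := by
  have : FiniteDimensional ℝ E := .of_fact_finrank_eq_succ k
  have : ProperSpace E := FiniteDimensional.proper_real E
  refine (isCompact_sphere 0 R).measure_lt_top_of_nhdsWithin fun y hyR ↦ ?_
  rw [mem_sphere_zero_iff_norm] at hyR
  have hy : y ≠ 0 := norm_ne_zero_iff.1 (hyR ▸ hR)
  have := isAddHaarMeasure_hausdorffMeasure_orthogonal (k := k) hy
  obtain ⟨K, t, ht, hK⟩ := (contDiffAt_sphereChart y).exists_lipschitzOnWith
  let P := (ℝ ∙ y)ᗮ.orthogonalProjectionOnto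
  have hPy : P y = 0 := Submodule.orthogonalProjectionOnto_orthogonalComplement_singleton_eq_zero y
  have hU : P ⁻¹' (t ∩ ball 0 1) ∩ {z | 0 < inner ℝ y z} ∈ 𝓝 y :=
    Filter.inter_mem
      (P.continuous.continuousAt.preimage_mem_nhds
        (by rw [hPy]; exact Filter.inter_mem ht (ball_mem_nhds 0 one_pos)))
      ((isOpen_lt continuous_const (by fun_prop)).mem_nhds (real_inner_self_pos.2 hy))
  refine ⟨_, inter_mem_nhdsWithin (sphere 0 R) hU, ?_⟩
  have hsub : sphere 0 R ∩ (P ⁻¹' (t ∩ ball 0 1) ∩ {z | 0 < inner ℝ y z}) ⊆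
      sphereChart y '' (t ∩ ball 0 1) := fun z ⟨hzR, hzt, hyz⟩ ↦
    ⟨P z, hzt, sphereChart_orthogonalProjectionOnto hy
      ((mem_sphere_zero_iff_norm.1 hzR).trans hyR.symm) hyz.le⟩
  calc _ ≤ μH[k] (sphereChart y '' (t ∩ ball 0 1)) := measure_mono hsub
    _ ≤ (K : ℝ≥0∞) ^ (k : ℝ) * μH[k] (t ∩ ball 0 1) :=
        (hK.mono Set.inter_subset_left).hausdorffMeasure_image_le k.cast_nonneg
    _ < ∞ := ENNReal.mul_lt_top (ENNReal.rpow_lt_top_of_nonneg k.cast_nonneg ENNReal.coe_ne_top)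
        ((measure_mono Set.inter_subset_right).trans_lt measure_ball_lt_top)

end SphereMeasure

lemma not_omega_ae_eq_one {E : Type*} [NormedAddCommGroup E] [InnerProductSpace ℝ E]
    [MeasurableSpace E] [BorelSpace E] {k : ℕ} [Fact (finrank ℝ E = k + 1)] {x : E} {R : ℝ}
    (hR : 0 < R) (hx0 : 0 < ‖x‖) (hx : ‖x‖ ≠ R) :
    ¬ omega x =ᵐ[μH[k].restrict (sphere 0 R)] 1 := by
  intro hone
  let y := (R / ‖x‖) • x
  have hy : ‖y‖ = R := by
    rw [norm_smul, norm_div, norm_norm, Real.norm_of_nonneg hR.le, div_mul_cancel₀ _ hx0.ne']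
  have hU : {z | 1 < omega x z} ∈ 𝓝 y :=
    (continuousAt_omega (ne_of_apply_ne norm (hy ▸ hx))).eventually_const_lt
      (one_lt_omega_smul hR hx0 hx)
  have hpos : 0 < μH[k] ({z | 1 < omega x z} ∩ sphere 0 R) :=
    hy ▸ hausdorffMeasure_inter_sphere_pos (norm_pos_iff.1 (hy ▸ hR)) hU
  refine hpos.ne' (measure_mono_null ?_ (ae_iff.1 (ae_imp_of_ae_restrict hone)))
  exact fun z ⟨hz, hzR⟩ h ↦ hz.ne' (h hzR)

theorem main_theorem_statement_D_general {E : Type*} [NormedAddCommGroup E]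
    [InnerProductSpace ℝ E] [MeasurableSpace E] [BorelSpace E] {k : ℕ}
    [Fact (finrank ℝ E = k + 1)] {R : ℝ} (hR : 0 < R) {x : E} (hx0 : 0 < ‖x‖) (hx : ‖x‖ ≠ R)
    {α β : ℂ} (him : max |α.im| |β.im| ≤ (π / 2) / Real.log ((R + ‖x‖) / |R - ‖x‖|))
    (h : ∫ y in sphere (0 : E) R, (omega x y : ℂ) ^ α ∂μH[k] =
      ∫ y in sphere (0 : E) R, (omega x y : ℂ) ^ β ∂μH[k]) :
    α + β = k ∨ α = β := by
  have : FiniteDimensional ℝ E := .of_fact_finrank_eq_succ k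
  have : IsFiniteMeasure (μH[k].restrict (sphere (0 : E) R)) :=
    isFiniteMeasure_restrict.2 (hausdorffMeasure_sphere_lt_top hR.ne').ne
  have hlog : 0 < Real.log ((R + ‖x‖) / |R - ‖x‖|) := by
    refine Real.log_pos ((one_lt_div (abs_pos.2 (sub_ne_zero.2 hx.symm))).2 ?_)
    exact abs_sub_lt_iff.2 ⟨by linarith, by linarith⟩
  have hne := ae_restrict_sphere_norm_ne hx (μH[k] : Measure E)
  have hL : ∀ᵐ y ∂μH[k].restrict (sphere (0 : E) R),
      |Real.log (omega x y)| ≤ Real.log ((R + ‖x‖) / |R - ‖x‖|) := by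
    filter_upwards [hne, ae_restrict_mem isClosed_sphere.measurableSet] with y hy hyR
    rw [← mem_sphere_zero_iff_norm.1 hyR]
    exact abs_log_omega_le hy
  rw [le_div_iff₀ hlog] at him
  exact_mod_cast add_eq_or_eq_of_integral_cpow_eq (c := k) (measurable_omega x).aemeasurable
    (hne.mono fun _ ↦ omega_pos) (not_omega_ae_eq_one hR hx0 hx) hL
    ((mul_le_mul_of_nonneg_right (le_max_left _ _) hlog.le).trans him)
    ((mul_le_mul_of_nonneg_right (le_max_right _ _) hlog.le).trans him)
    (integral_omega_cpow_eq_sub k.cast_nonneg hx) h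

/-- Main Theorem, Statement (D): if
`max (|Im α|, |Im β|) ≤ (π/2) / log ((R + r)/|R − r|)` with `r = ‖x‖`, then equality of the
integrals `∫_{S^k(R)} ω^α = ∫_{S^k(R)} ω^β` implies `α + β = k` or `α = β`. -/
theorem main_theorem_statement_D
    (k : ℕ) (hk : 1 ≤ k) (R : ℝ) (hR : 0 < R)
    (x : EuclideanSpace ℝ (Fin (k + 1))) (hx0 : 0 < ‖x‖) (hx : ‖x‖ ≠ R)
    (α β : ℂ)
    (him : max |α.im| |β.im| ≤ (π / 2) / Real.log ((R + ‖x‖) / |R - ‖x‖|))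
    (h : ∫ y in Metric.sphere (0 : EuclideanSpace ℝ (Fin (k + 1))) R,
          ((|‖x‖ ^ 2 - ‖y‖ ^ 2| / ‖x - y‖ ^ 2 : ℝ) : ℂ) ^ α ∂μH[k]
        = ∫ y in Metric.sphere (0 : EuclideanSpace ℝ (Fin (k + 1))) R,
          ((|‖x‖ ^ 2 - ‖y‖ ^ 2| / ‖x - y‖ ^ 2 : ℝ) : ℂ) ^ β ∂μH[k]) :
    α + β = (k : ℂ) ∨ α = β := by
  have : Fact (finrank ℝ (EuclideanSpace ℝ (Fin (k + 1))) = k + 1) := ⟨finrank_euclideanSpace_fin⟩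
  exact main_theorem_statement_D_general hR hx0 hx him h
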